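/- Fix T > 0, t₀ ∈ ℝ and define μ(t) = 1/(T + t₀ − t) for t ∈ [t₀, t₀ + T). Let α_ξ : (0,∞) → (0,∞) be differentiable with α_ξ'(s) ≤ s⁻²·α_ξ(s)² for all s > 0. Let σ' > 0, set σ = (3 + σ')/2, let C ≥ 0, and let U : [t₀, t₀ + T) → [0,∞) be differentiable with U'(t) ≤ −(2σ − 1)·α_ξ(μ(t))·U(t) + (α_ξ(μ(t)))⁻¹·C/2 for all t ∈ [t₀, t₀ + T). Then for every t ∈ [t₀, t₀ + T): α_ξ(μ(t))²·U(t) ≤ exp(−σ'·∫_{t₀}^{t} α_ξ(μ(τ)) dτ)·α_ξ(μ(t₀))²·U(t₀) + C/(2σ'). -/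

import Mathlib

open Set

/-!
The reciprocal time `μ(t) = 1 / (T + t₀ - t)` solves `μ̇ = μ²`, so the growth bound on `α_ξ` says
that the gain `g = α_ξ ∘ μ` satisfies `ġ ≤ g²`. Differentiating `V = g²U` therefore costs at most
`2gV`, which is absorbed by the damping `(2 + σ')g` of `U`; what remains is
`V̇ ≤ -σ'g(V - C/(2σ'))`, in which the factor `g` also multiplies the disturbance. The excess of `V`
over the constant `C/(2σ')` therefore decays at least as fast as `exp(-σ'∫g)`.
-/

section Comparison

variable {a b : ℝ}

theorem hasDerivAt_integral_of_continuousOn_Icc {E : Type*} [NormedAddCommGroup E] [NormedSpace ℝ E]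
    [CompleteSpace E] {k : ℝ → E} (hk : ContinuousOn k (Icc a b)) {t : ℝ} (ht : t ∈ Ioo a b) :
    HasDerivAt (fun x => ∫ τ in a..x, k τ) (k t) t := by
  have hint : IntervalIntegrable k MeasureTheory.volume a t :=
    (hk.mono (Icc_subset_Icc_right ht.2.le)).intervalIntegrable_of_Icc ht.1.le
  have hk' : ContinuousOn k (Ioo a b) := hk.mono Ioo_subset_Icc_self
  exact intervalIntegral.integral_hasDerivAt_right hint
    (hk'.stronglyMeasurableAtFilter isOpen_Ioo t ht) (hk'.continuousAt (isOpen_Ioo.mem_nhds ht))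

theorem le_exp_neg_integral_mul_of_deriv_le {k w w' : ℝ → ℝ} (hab : a ≤ b)
    (hk : ContinuousOn k (Icc a b)) (hw : ContinuousOn w (Icc a b))
    (hw' : ∀ t ∈ Ioo a b, HasDerivAt w (w' t) t) (hle : ∀ t ∈ Ioo a b, w' t ≤ -(k t * w t)) :
    w b ≤ Real.exp (-∫ τ in a..b, k τ) * w a := by
  let K : ℝ → ℝ := fun t => ∫ τ in a..t, k τ
  have hK : ContinuousOn K (Icc a b) := by
    simpa only [uIcc_of_le hab] using intervalIntegral.continuousOn_primitive_interval'
      (hk.intervalIntegrable_of_Icc hab) left_mem_uIcc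
  have hderiv : ∀ t ∈ Ioo a b, HasDerivAt (fun t => Real.exp (K t) * w t)
      (Real.exp (K t) * k t * w t + Real.exp (K t) * w' t) t := fun t ht =>
    (hasDerivAt_integral_of_continuousOn_Icc hk ht).exp.fun_mul (hw' t ht)
  have hanti : AntitoneOn (fun t => Real.exp (K t) * w t) (Icc a b) := by
    refine antitoneOn_of_hasDerivWithinAt_nonpos (convex_Icc a b) (hK.rexp.mul hw)
      (fun t ht => (hderiv t (by rwa [interior_Icc] at ht)).hasDerivWithinAt) fun t ht => ?_
    rw [interior_Icc] at ht
    rw [mul_assoc, ← mul_add]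
    exact mul_nonpos_of_nonneg_of_nonpos (Real.exp_pos _).le (by linarith [hle t ht])
  have hends : Real.exp (K b) * w b ≤ w a := by
    simpa [K] using hanti (left_mem_Icc.2 hab) (right_mem_Icc.2 hab) hab
  rwa [Real.exp_neg, ← div_eq_inv_mul, le_div_iff₀' (Real.exp_pos _)]

end Comparison

section RescaledLyapunov

variable {r c : ℝ}

theorem deriv_sq_mul_le {g g' u u' : ℝ} (hg : 0 < g) (hu : 0 ≤ u)
    (hg' : g' ≤ g ^ 2) (hu' : u' ≤ -(2 + r) * g * u + g⁻¹ * c) :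
    2 * g * g' * u + g ^ 2 * u' ≤ -(r * g * (g ^ 2 * u)) + g * c := by
  calc 2 * g * g' * u + g ^ 2 * u'
      ≤ 2 * g * g ^ 2 * u + g ^ 2 * (-(2 + r) * g * u + g⁻¹ * c) := by gcongr
    _ = -(r * g * (g ^ 2 * u)) + g * c := by field_simp; ring

theorem sq_mul_sub_le_exp_neg_integral_mul {a b : ℝ} {g g' U U' : ℝ → ℝ} (hab : a ≤ b) (hr : r ≠ 0)
    (hg : ContinuousOn g (Icc a b)) (hg' : ∀ t ∈ Ioo a b, HasDerivAt g (g' t) t)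
    (hU : ContinuousOn U (Icc a b)) (hU' : ∀ t ∈ Ioo a b, HasDerivAt U (U' t) t)
    (hgpos : ∀ t ∈ Ioo a b, 0 < g t) (hUnonneg : ∀ t ∈ Ioo a b, 0 ≤ U t)
    (hgle : ∀ t ∈ Ioo a b, g' t ≤ g t ^ 2)
    (hUle : ∀ t ∈ Ioo a b, U' t ≤ -(2 + r) * g t * U t + (g t)⁻¹ * c) :
    g b ^ 2 * U b - c / r ≤
      Real.exp (-r * ∫ τ in a..b, g τ) * (g a ^ 2 * U a - c / r) := by
  have hcont : ContinuousOn (fun t => g t ^ 2 * U t - c / r) (Icc a b) :=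
    ((hg.pow 2).mul hU).sub continuousOn_const
  have hderiv : ∀ t ∈ Ioo a b, HasDerivAt (fun t => g t ^ 2 * U t - c / r)
      (2 * g t * g' t * U t + g t ^ 2 * U' t) t := fun t ht => by
    simpa using (((hg' t ht).fun_pow 2).fun_mul (hU' t ht)).sub_const (c / r)
  have hle : ∀ t ∈ Ioo a b, 2 * g t * g' t * U t + g t ^ 2 * U' t ≤
      -(r * g t * (g t ^ 2 * U t - c / r)) := fun t ht =>
    (deriv_sq_mul_le (hgpos t ht) (hUnonneg t ht) (hgle t ht) (hUle t ht)).trans_eq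
      (by field_simp; ring)
  simpa only [intervalIntegral.integral_const_mul, neg_mul] using
    le_exp_neg_integral_mul_of_deriv_le hab (hg.const_mul r) hcont hderiv hle

end RescaledLyapunov

theorem hasDerivAt_one_div_const_sub {𝕜 : Type*} [NontriviallyNormedField 𝕜] {s t : 𝕜}
    (h : s - t ≠ 0) : HasDerivAt (fun x => 1 / (s - x)) ((1 / (s - t)) ^ 2) t := by
  simpa using ((hasDerivAt_id t).const_sub s).fun_inv h

theorem mul_sq_le_of_le_inv_sq_mul {𝕜 : Type*} [Field 𝕜] [LinearOrder 𝕜] [IsStrictOrderedRing 𝕜]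
    {x y z : 𝕜} (hx : x ≠ 0) (h : y ≤ x⁻¹ ^ 2 * z) : y * x ^ 2 ≤ z := by
  rwa [inv_pow, ← div_eq_inv_mul, le_div_iff₀ (by positivity)] at h

/-- **Parameter-estimator estimate** (proof of Lemma 3, adaptive DPTCO): rescaling the
estimator Lyapunov function `U` by `α_ξ(μ(t))²` and using `μ̇ = μ²` with the growth
bound on `α_ξ` yields
`α_ξ(μ(t))²·U(t) ≤ exp(-σ'·∫_{t₀}^t α_ξ(μ(τ)) dτ)·α_ξ(μ(t₀))²·U(t₀) + C/(2σ')`. -/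
theorem adaptive_estimator_bound
    (T t₀ : ℝ) (hT : 0 < T)
    (μ : ℝ → ℝ) (hμ : ∀ t, μ t = 1 / (T + t₀ - t))
    (αξ αξ' : ℝ → ℝ)
    (hαξpos : ∀ s, 0 < s → 0 < αξ s)
    (hαξderiv : ∀ s, 0 < s → HasDerivAt αξ (αξ' s) s)
    (hαξ' : ∀ s, 0 < s → αξ' s ≤ s⁻¹ ^ 2 * αξ s ^ 2)
    (σ' σ : ℝ) (hσ' : 0 < σ') (hσ : σ = (3 + σ') / 2)
    (C : ℝ) (hC : 0 ≤ C)
    (U U' : ℝ → ℝ)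
    (hUnonneg : ∀ t ∈ Ico t₀ (t₀ + T), 0 ≤ U t)
    (hUderiv : ∀ t ∈ Ico t₀ (t₀ + T), HasDerivAt U (U' t) t)
    (hUineq : ∀ t ∈ Ico t₀ (t₀ + T),
      U' t ≤ -(2 * σ - 1) * αξ (μ t) * U t + (αξ (μ t))⁻¹ * C / 2) :
    ∀ t ∈ Ico t₀ (t₀ + T),
      αξ (μ t) ^ 2 * U t ≤
        Real.exp (-σ' * ∫ τ in t₀..t, αξ (μ τ)) * (αξ (μ t₀) ^ 2 * U t₀) +
          C / (2 * σ') := by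
  intro t ht
  have hIcc : Icc t₀ t ⊆ Ico t₀ (t₀ + T) := Icc_subset_Ico_right ht.2
  have hIoo : Ioo t₀ t ⊆ Ico t₀ (t₀ + T) := Ioo_subset_Icc_self.trans hIcc
  have hrem : ∀ s ∈ Ico t₀ (t₀ + T), 0 < T + t₀ - s := fun s hs => by linarith [hs.2]
  have hμpos : ∀ s ∈ Ico t₀ (t₀ + T), 0 < μ s := fun s hs => hμ s ▸ one_div_pos.2 (hrem s hs)
  have hμderiv : ∀ s ∈ Ico t₀ (t₀ + T), HasDerivAt μ (μ s ^ 2) s := fun s hs =>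
    funext hμ ▸ hasDerivAt_one_div_const_sub (hrem s hs).ne'
  have hgain : ∀ s ∈ Ico t₀ (t₀ + T),
      HasDerivAt (fun s => αξ (μ s)) (αξ' (μ s) * μ s ^ 2) s := fun s hs =>
    (hαξderiv _ (hμpos s hs)).comp s (hμderiv s hs)
  have hgain_le : ∀ s ∈ Ico t₀ (t₀ + T), αξ' (μ s) * μ s ^ 2 ≤ αξ (μ s) ^ 2 := fun s hs =>
    mul_sq_le_of_le_inv_sq_mul (hμpos s hs).ne' (hαξ' _ (hμpos s hs))
  have hexcess := sq_mul_sub_le_exp_neg_integral_mul (c := C / 2) ht.1 hσ'.ne'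
    (HasDerivAt.continuousOn fun s hs => hgain s (hIcc hs)) (fun s hs => hgain s (hIoo hs))
    (HasDerivAt.continuousOn fun s hs => hUderiv s (hIcc hs)) (fun s hs => hUderiv s (hIoo hs))
    (fun s hs => hαξpos _ (hμpos s (hIoo hs))) (fun s hs => hUnonneg s (hIoo hs))
    (fun s hs => hgain_le s (hIoo hs))
    (fun s hs => (hUineq s (hIoo hs)).trans_eq (by rw [hσ]; ring))
  rw [div_div, mul_sub] at hexcess
  have : 0 ≤ Real.exp (-σ' * ∫ τ in t₀..t, αξ (μ τ)) * (C / (2 * σ')) := by positivity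
  linarith
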